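/- In the heat kernel setup, fix σ < 2 and two integers a, a' ≥ 1. Then there is a constant C such that for every f ∈ L^∞(μ): sup_{0<t≤1} t^{−σ/2} ‖Q_t^{(a')} f‖_∞ ≤ C·( ‖e^{−L}f‖_∞ + sup_{0<t≤1} t^{−σ/2} ‖Q_t^{(a)} f‖_∞ ). Consequently the Hölder norms ‖f‖_{C^σ,(a)} := ‖e^{−L}f‖_∞ + sup_{0<t≤1} t^{−σ/2}‖Q_t^{(a)}f‖_∞, for different integer parameters a ≥ 1, are pairwise equivalent; in particular the space C^σ does not depend on the choice of a. -/

import Mathlib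

open MeasureTheory Metric Set
open scoped ENNReal NNReal

noncomputable section

/-- The (pointwise) supremum norm of a real-valued function, valued in `ℝ≥0∞`. -/
def supNorm {M : Type*} (g : M → ℝ) : ℝ≥0∞ := ⨆ x, (‖g x‖₊ : ℝ≥0∞)

/-- `γ_a = ∫_0^∞ s^a e^{-s} ds/s`. -/
def gammaInt (a : ℕ) : ℝ := ∫ s in Set.Ioi (0 : ℝ), s ^ a * Real.exp (-s) / s

/-- A conservative heat kernel on a doubling metric measure space, satisfying the
Gaussian upper estimates (UE) for all time derivatives, for `0 < t ≤ 1`. -/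
structure HeatKernelSetup (M : Type*) [MeasurableSpace M] [MetricSpace M] where
  μ : Measure M
  p : ℝ → M → M → ℝ
  C_D : ℝ
  C_D_pos : 0 < C_D
  doubling : ∀ (x : M) (r : ℝ), 0 < r →
    μ (Metric.ball x (2 * r)) ≤ ENNReal.ofReal C_D * μ (Metric.ball x r)
  p_nonneg : ∀ t : ℝ, 0 < t → ∀ x y, 0 ≤ p t x y
  p_symm : ∀ t : ℝ, 0 < t → ∀ x y, p t x y = p t y x
  p_meas : ∀ t : ℝ, 0 < t → Measurable (Function.uncurry (p t))
  semigroup : ∀ s t : ℝ, 0 < s → 0 < t → ∀ x z,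
    p (s + t) x z = ∫ y, p s x y * p t y z ∂μ
  conservative : ∀ t : ℝ, 0 < t → ∀ x, ∫ y, p t x y ∂μ = 1
  smooth : ∀ (x y : M) (m : ℕ) (t : ℝ), 0 < t →
    DifferentiableAt ℝ (iteratedDeriv m (fun s => p s x y)) t
  diff_under_int : ∀ (f : M → ℝ), Measurable f → supNorm f < ⊤ →
    ∀ (m : ℕ) (x : M) (t : ℝ), 0 < t →
      iteratedDeriv m (fun s => ∫ y, p s x y * f y ∂μ) t
        = ∫ y, iteratedDeriv m (fun s => p s x y) t * f y ∂μ
  UE : ∀ m : ℕ, ∃ C, 0 < C ∧ ∃ c, 0 < c ∧ ∀ t : ℝ, 0 < t → t ≤ 1 → ∀ x y,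
    |t ^ m * iteratedDeriv m (fun s => p s x y) t|
      ≤ C / Real.sqrt ((μ (Metric.ball x (Real.sqrt t))).toReal
            * (μ (Metric.ball y (Real.sqrt t))).toReal)
          * Real.exp (-c * dist x y ^ 2 / t)

namespace HeatKernelSetup

variable {M : Type*} [MeasurableSpace M] [MetricSpace M] (H : HeatKernelSetup M)

/-- The semigroup `e^{-tL}` applied to `f`. -/
def S (t : ℝ) (f : M → ℝ) (x : M) : ℝ := ∫ y, H.p t x y * f y ∂H.μ

/-- `Q_t^{(a)} f = (-1)^a t^a ∂_t^a (e^{-tL} f)`. -/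
def Q (a : ℕ) (t : ℝ) (f : M → ℝ) (x : M) : ℝ :=
  (-1 : ℝ) ^ a * t ^ a * iteratedDeriv a (fun s => H.S s f x) t

/-- `P_t^{(a)} f = ∑_{k<a} c_{a,k} (-1)^k t^k ∂_t^k (e^{-tL} f)`, where the coefficients
`c_{a,k} = 1/k!` are determined by `φ_a(x) = (∑_k c_{a,k} x^k) e^{-x}`. -/
def P (a : ℕ) (t : ℝ) (f : M → ℝ) (x : M) : ℝ :=
  ∑ k ∈ Finset.range a, ((Nat.factorial k : ℝ))⁻¹ * (-1 : ℝ) ^ k * t ^ k *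
    iteratedDeriv k (fun s => H.S s f x) t

/-- `(tL)P_t^{(a)} f = ∑_{k<a} c_{a,k} (-1)^{k+1} t^{k+1} ∂_t^{k+1} (e^{-tL} f)`. -/
def LP (a : ℕ) (t : ℝ) (f : M → ℝ) (x : M) : ℝ :=
  ∑ k ∈ Finset.range a, ((Nat.factorial k : ℝ))⁻¹ * (-1 : ℝ) ^ (k + 1) * t ^ (k + 1) *
    iteratedDeriv (k + 1) (fun s => H.S s f x) t

/-- The Hölder norm `‖f‖_{C^σ,(a)} = ‖e^{-L} f‖_∞ + sup_{0<t≤1} t^{-σ/2} ‖Q_t^{(a)} f‖_∞`. -/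
def CNorm (a : ℕ) (σ : ℝ) (f : M → ℝ) : ℝ≥0∞ :=
  supNorm (H.S 1 f) +
    ⨆ t ∈ Set.Ioc (0 : ℝ) 1, ENNReal.ofReal (t ^ (-σ / 2)) * supNorm (H.Q a t f)

/-- The integrand of the paraproduct `Π_g^{(b)}(f)` at frequency scale `t`:
`(tL)P_t^{(b)}( Q_t^{(b-1)} f · P_t^{(b)} g ) + Q_t^{(b-1)}( (tL)P_t^{(b)} f · P_t^{(b)} g )`. -/
def paraInner (b : ℕ) (g f : M → ℝ) (t : ℝ) : M → ℝ := fun y =>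
  H.LP b t (fun z => H.Q (b - 1) t f z * H.P b t g z) y
    + H.Q (b - 1) t (fun z => H.LP b t f z * H.P b t g z) y

/-- `Q_s^{(a)} Π_g^{(b)}(f)`, defined by applying `Q_s^{(a)}` under the time integral. -/
def paraQ (b a : ℕ) (g f : M → ℝ) (s : ℝ) : M → ℝ := fun x =>
  (gammaInt b)⁻¹ * ∫ t in Set.Ioc (0 : ℝ) 1, H.Q a s (H.paraInner b g f t) x / t

/-- `e^{-L} Π_g^{(b)}(f)`, defined by applying `e^{-L}` under the time integral. -/
def paraS (b : ℕ) (g f : M → ℝ) : M → ℝ := fun x =>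
  (gammaInt b)⁻¹ * ∫ t in Set.Ioc (0 : ℝ) 1, H.S 1 (H.paraInner b g f t) x / t

/-- The paraproduct `Π_g^{(b)}(f)` as a function, when the integral converges. -/
def paraFn (b : ℕ) (g f : M → ℝ) : M → ℝ := fun x =>
  (gammaInt b)⁻¹ * ∫ t in Set.Ioc (0 : ℝ) 1, H.paraInner b g f t x / t

/-- The resolution operator `R(v)_t = ∫_0^t P_{t-s}^{(b)} v(s) ds`. -/
def resolve (b : ℕ) (v : ℝ → M → ℝ) (t : ℝ) : M → ℝ := fun x =>
  ∫ s in Set.Ioc (0 : ℝ) t, H.P b (t - s) (v s) x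

end HeatKernelSetup

/-!
By doubling, the Gaussian bound makes `‖∂_t^m p_t(x, ·)‖_1` at most a constant times `t^{-m}`, so
`t^m ∂_t^m e^{-tL}` is bounded on `L^∞`, uniformly in `0 < t ≤ 1`. The parameter of the norm is
raised by splitting `∂_t^{j+a} e^{-tL} = (∂^j e^{-(t/2)L}) (∂^a e^{-(t/2)L})` at half time. It is
lowered by integrating `∂_s^{a+1} e^{-sL} f` from `s = t` to `s = 2`: for `σ < 2a` the integral of
the singular power `s^{σ/2-a-1}` is dominated by the lower endpoint, and the value at time `2` is
`∂^a e^{-L}` applied to `e^{-L} f`, hence controlled by `‖e^{-L} f‖_∞`.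
-/

open Filter Topology

section SupNorm

variable {X : Type*} {f : X → ℝ}

lemma ofReal_mul_supNorm_le_ofReal_iff {w B : ℝ} (hw : 0 ≤ w) (hB : 0 ≤ B) :
    ENNReal.ofReal w * supNorm f ≤ ENNReal.ofReal B ↔ ∀ x, w * |f x| ≤ B := by
  simp only [supNorm, ENNReal.mul_iSup, iSup_le_iff, ← enorm_eq_nnnorm, Real.enorm_eq_ofReal_abs,
    ← ENNReal.ofReal_mul hw, ENNReal.ofReal_le_ofReal_iff hB]

lemma supNorm_le_ofReal_iff {B : ℝ} (hB : 0 ≤ B) :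
    supNorm f ≤ ENNReal.ofReal B ↔ ∀ x, |f x| ≤ B := by
  simpa only [ENNReal.ofReal_one, one_mul] using
    ofReal_mul_supNorm_le_ofReal_iff (f := f) zero_le_one hB

lemma abs_le_toReal_supNorm (hf : supNorm f < ⊤) (x : X) : |f x| ≤ (supNorm f).toReal :=
  (supNorm_le_ofReal_iff ENNReal.toReal_nonneg).1 (ENNReal.ofReal_toReal hf.ne).ge x

end SupNorm

section RealVariable

variable {E : Type*} [NormedAddCommGroup E] [NormedSpace ℝ E]

lemma iteratedDeriv_add_right_eq_of_forall_pos {F G : ℝ → E} {t : ℝ}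
    (h : ∀ r, 0 < r → F (r + t) = G r) (n : ℕ) {s : ℝ} (hs : 0 < s) :
    iteratedDeriv n F (s + t) = iteratedDeriv n G s := by
  have hFG : (fun r => F (r + t)) =ᶠ[𝓝 s] G := (lt_mem_nhds hs).mono h
  rw [← hFG.iteratedDeriv_eq n, iteratedDeriv_comp_add_const]

lemma norm_sub_le_of_norm_deriv_le_rpow {F F' : ℝ → E} {A e t T : ℝ} (he : e ≠ 0) (ht : 0 < t)
    (htT : t ≤ T) (hF : ∀ s ∈ Icc t T, HasDerivAt F (F' s) s)
    (hF' : ∀ s ∈ Icc t T, ‖F' s‖ ≤ A * s ^ (e - 1)) :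
    ‖F T - F t‖ ≤ A * ((T ^ e - t ^ e) / e) := by
  have hpow : ∀ s ∈ Icc t T,
      HasDerivAt (fun r : ℝ => A * ((r ^ e - t ^ e) / e)) (A * s ^ (e - 1)) s := fun s hs => by
    have := (((Real.hasDerivAt_rpow_const (p := e) (Or.inl (ht.trans_le hs.1).ne')).sub_const
      (t ^ e)).div_const e).const_mul A
    rwa [mul_div_cancel_left₀ _ he] at this
  refine image_norm_le_of_norm_deriv_right_le_deriv_boundary' (f := fun s => F s - F t)
    (B := fun s => A * ((s ^ e - t ^ e) / e))
    (fun s hs => ((hF s hs).sub_const _).continuousAt.continuousWithinAt)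
    (fun s hs => ((hF s (Ico_subset_Icc_self hs)).sub_const _).hasDerivWithinAt) (by simp)
    (fun s hs => (hpow s hs).continuousAt.continuousWithinAt)
    (fun s hs => (hpow s (Ico_subset_Icc_self hs)).hasDerivWithinAt)
    (fun s hs => hF' s (Ico_subset_Icc_self hs)) (right_mem_Icc.2 htT)

lemma summable_pow_mul_exp_neg_mul_pow {D c q : ℝ} (hD : 0 < D) (hc : 0 < c) (hq : 1 < q) :
    Summable fun k : ℕ => D ^ k * Real.exp (-c * q ^ k) := by
  have hratio : ∀ k : ℕ, ‖D ^ (k + 1) * Real.exp (-c * q ^ (k + 1))‖ /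
      ‖D ^ k * Real.exp (-c * q ^ k)‖ = D * Real.exp (-(c * (q - 1) * q ^ k)) := fun k => by
    rw [Real.norm_of_nonneg (by positivity), Real.norm_of_nonneg (by positivity),
      div_eq_iff (by positivity), mul_mul_mul_comm, ← Real.exp_add]
    ring_nf
  refine summable_of_ratio_test_tendsto_lt_one zero_lt_one
    (Eventually.of_forall fun k => by positivity) ?_
  simp_rw [hratio]
  rw [← mul_zero D]
  exact (Real.tendsto_exp_neg_atTop_nhds_zero.comp ((tendsto_pow_atTop_atTop_of_one_lt
    hq).const_mul_atTop (mul_pos hc (sub_pos.2 hq)))).const_mul D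

end RealVariable

section Measure

variable {X : Type*} [MeasurableSpace X]

section Derivative

variable {F : Type*} [NormedAddCommGroup F] [NormedSpace ℝ F] [MeasurableSpace F] [BorelSpace F]
  [SecondCountableTopology F] {g : ℝ → X → F}

lemma measurable_deriv_of_forall_ge {t : ℝ} (hg : ∀ s, t ≤ s → Measurable (g s))
    (hd : ∀ y, DifferentiableAt ℝ (fun s => g s y) t) :
    Measurable fun y => deriv (fun s => g s y) t := by
  let u : ℕ → ℝ := fun n => 1 / ((n : ℝ) + 1)
  have hu_pos : ∀ n, 0 < u n := fun n => Nat.one_div_pos_of_nat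
  have hu : Tendsto u atTop (𝓝[≠] 0) :=
    tendsto_nhdsWithin_of_tendsto_nhds_of_eventually_within _
      tendsto_one_div_add_atTop_nhds_zero_nat (Eventually.of_forall fun n => (hu_pos n).ne')
  refine measurable_of_tendsto_metrizable (f := fun n y => (u n)⁻¹ • (g (t + u n) y - g t y))
    (fun n => ((hg _ (le_add_of_nonneg_right (hu_pos n).le)).sub (hg t le_rfl)).const_smul _)
    (tendsto_pi_nhds.2 fun y => (hd y).hasDerivAt.tendsto_slope_zero.comp hu)

lemma measurable_iteratedDeriv {t₀ : ℝ} (hg : ∀ t, t₀ < t → Measurable (g t))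
    (hd : ∀ y m t, t₀ < t → DifferentiableAt ℝ (iteratedDeriv m fun s => g s y) t) (m : ℕ) :
    ∀ t, t₀ < t → Measurable fun y => iteratedDeriv m (fun s => g s y) t := by
  induction m with
  | zero => simpa only [iteratedDeriv_zero] using hg
  | succ m ih =>
    intro t ht
    simp only [iteratedDeriv_succ]
    exact measurable_deriv_of_forall_ge (g := fun r y => iteratedDeriv m (fun s => g s y) r)
      (fun s hs => ih s (ht.trans_le hs)) fun y => hd y m t ht

end Derivative

variable {μ : Measure X}

lemma abs_integral_mul_le {q g : X → ℝ} {B : ℝ} (hq : Integrable q μ) (hB : ∀ x, |g x| ≤ B) :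
    |∫ y, q y * g y ∂μ| ≤ (∫ y, |q y| ∂μ) * B := by
  rw [← integral_mul_const, ← Real.norm_eq_abs]
  refine norm_integral_le_of_norm_le (hq.abs.mul_const B) (Eventually.of_forall fun y => ?_)
  rw [norm_mul]
  exact mul_le_mul_of_nonneg_left (hB y) (abs_nonneg _)

-- The sets `B k` need not be measurable, so their indicators are taken on measurable hulls.
lemma exists_integrable_ge_of_summable {ι : Type*} [Countable ι] {B : ι → Set X} {w : ι → ℝ}
    (hw : ∀ k, 0 ≤ w k) (hB : ∀ k, μ (B k) ≠ ⊤) (hs : Summable fun k => w k * μ.real (B k)) :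
    ∃ G : X → ℝ, Integrable G μ ∧ ∫ y, G y ∂μ = ∑' k, w k * μ.real (B k) ∧
      ∀ᵐ y ∂μ, ∀ k, y ∈ B k → w k ≤ G y := by
  let F : X → ℝ≥0∞ := fun y =>
    ∑' k, (toMeasurable μ (B k)).indicator (fun _ => ENNReal.ofReal (w k)) y
  have hmeas : ∀ k, Measurable
      ((toMeasurable μ (B k)).indicator fun _ => ENNReal.ofReal (w k)) := fun k =>
    measurable_const.indicator (measurableSet_toMeasurable _ _)
  have hF : Measurable F := Measurable.tsum hmeas
  have hnonneg : ∀ k, 0 ≤ w k * μ.real (B k) := fun k => mul_nonneg (hw k) measureReal_nonneg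
  have hlint : ∫⁻ y, F y ∂μ = ENNReal.ofReal (∑' k, w k * μ.real (B k)) := by
    rw [lintegral_tsum fun k => (hmeas k).aemeasurable, ENNReal.ofReal_tsum_of_nonneg hnonneg hs]
    congr 1 with k
    rw [lintegral_indicator_const (measurableSet_toMeasurable _ _), measure_toMeasurable,
      ENNReal.ofReal_mul (hw k), ofReal_measureReal (hB k)]
  have hfin : ∫⁻ y, F y ∂μ ≠ ⊤ := hlint ▸ ENNReal.ofReal_ne_top
  refine ⟨fun y => (F y).toReal, integrable_toReal_of_lintegral_ne_top hF.aemeasurable hfin, ?_, ?_⟩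
  · rw [integral_toReal hF.aemeasurable (ae_lt_top hF hfin), hlint,
      ENNReal.toReal_ofReal (tsum_nonneg hnonneg)]
  · filter_upwards [ae_lt_top hF hfin] with y hy k hyk
    rw [← ENNReal.ofReal_le_iff_le_toReal hy.ne]
    calc ENNReal.ofReal (w k)
        = (toMeasurable μ (B k)).indicator (fun _ => ENNReal.ofReal (w k)) y := by
          rw [indicator_of_mem (subset_toMeasurable _ _ hyk)]
      _ ≤ F y := ENNReal.le_tsum k

end Measure

lemma exists_dist_lt_two_pow_mul {X : Type*} [PseudoMetricSpace X] (x y : X) {ρ : ℝ}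
    (hρ : 0 < ρ) : ∃ k : ℕ, dist x y < 2 ^ k * ρ ∧ (4 ^ k - 1) / 4 * ρ ^ 2 ≤ dist x y ^ 2 := by
  rcases lt_or_ge (dist x y) ρ with hlt | hge
  · exact ⟨0, by simpa using hlt, by simp⟩
  · obtain ⟨k, hk, hk'⟩ := exists_nat_pow_near ((one_le_div hρ).2 hge) one_lt_two
    rw [le_div_iff₀ hρ] at hk
    refine ⟨k + 1, (div_lt_iff₀ hρ).1 hk', ?_⟩
    calc ((4 : ℝ) ^ (k + 1) - 1) / 4 * ρ ^ 2 ≤ 4 ^ k * ρ ^ 2 := by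
          gcongr
          rw [pow_succ]
          linarith
      _ = (2 ^ k * ρ) ^ 2 := by
          rw [mul_pow, ← pow_mul, mul_comm k, pow_mul]
          norm_num
      _ ≤ dist x y ^ 2 := by gcongr

namespace HeatKernelSetup

variable {M : Type*} [MeasurableSpace M] [MetricSpace M] (H : HeatKernelSetup M)

section Volume

-- A ball of measure `0` or `∞` has `toReal` volume `0`; the division in `UE` then returns `0`,
-- so that the kernel vanishes identically, against conservativeness.
lemma measureReal_ball_ne_zero (x : M) {r : ℝ} (hr : 0 < r) (hr1 : r ≤ 1) :
    H.μ.real (ball x r) ≠ 0 := by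
  intro hball
  obtain ⟨C, -, c, -, hUE⟩ := H.UE 0
  have hp : ∀ y, H.p (r ^ 2) x y = 0 := fun y => by
    have h := hUE (r ^ 2) (by positivity) (pow_le_one₀ hr.le hr1) x y
    rw [Real.sqrt_sq hr.le, ← measureReal_def, hball] at h
    simpa using h
  have hone := H.conservative (r ^ 2) (by positivity) x
  simp only [hp, integral_zero, zero_ne_one] at hone

lemma measure_ball_two_pow_mul_le (x : M) {r : ℝ} (hr : 0 < r) (k : ℕ) :
    H.μ (ball x (2 ^ k * r)) ≤ ENNReal.ofReal H.C_D ^ k * H.μ (ball x r) := by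
  induction k with
  | zero => simp
  | succ k ih =>
    calc H.μ (ball x (2 ^ (k + 1) * r)) = H.μ (ball x (2 * (2 ^ k * r))) := by ring_nf
      _ ≤ ENNReal.ofReal H.C_D * H.μ (ball x (2 ^ k * r)) := H.doubling x _ (by positivity)
      _ ≤ ENNReal.ofReal H.C_D * (ENNReal.ofReal H.C_D ^ k * H.μ (ball x r)) := by gcongr
      _ = ENNReal.ofReal H.C_D ^ (k + 1) * H.μ (ball x r) := by ring

lemma measure_ball_ne_top (x : M) (r : ℝ) : H.μ (ball x r) ≠ ⊤ := by
  obtain ⟨k, hk⟩ := pow_unbounded_of_one_lt r one_lt_two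
  have hunit : H.μ (ball x 1) ≠ ⊤ :=
    (ENNReal.toReal_ne_zero.1 (H.measureReal_ball_ne_zero x one_pos le_rfl)).2
  refine ne_top_of_le_ne_top (ENNReal.mul_ne_top (ENNReal.pow_ne_top ENNReal.ofReal_ne_top) hunit)
    ((measure_mono (ball_subset_ball ?_)).trans (H.measure_ball_two_pow_mul_le x one_pos k))
  rw [mul_one]
  exact hk.le

lemma measureReal_ball_mono {x y : M} {r s : ℝ} (h : ball x r ⊆ ball y s) :
    H.μ.real (ball x r) ≤ H.μ.real (ball y s) :=
  measureReal_mono h (H.measure_ball_ne_top y s)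

lemma measureReal_ball_pos (x : M) {r : ℝ} (hr : 0 < r) : 0 < H.μ.real (ball x r) :=
  (measureReal_nonneg.lt_of_ne'
    (H.measureReal_ball_ne_zero x (lt_min hr one_pos) (min_le_right r 1))).trans_le
    (H.measureReal_ball_mono (ball_subset_ball (min_le_left r 1)))

lemma measureReal_ball_two_pow_mul_le (x : M) {r : ℝ} (hr : 0 < r) (k : ℕ) :
    H.μ.real (ball x (2 ^ k * r)) ≤ H.C_D ^ k * H.μ.real (ball x r) := by
  have h := ENNReal.toReal_mono (ENNReal.mul_ne_top (ENNReal.pow_ne_top ENNReal.ofReal_ne_top)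
    (H.measure_ball_ne_top x r)) (H.measure_ball_two_pow_mul_le x hr k)
  rwa [ENNReal.toReal_mul, ENNReal.toReal_pow, ENNReal.toReal_ofReal H.C_D_pos.le] at h

include H in
lemma one_le_C_D (x : M) : 1 ≤ H.C_D := by
  have h := (H.measureReal_ball_mono (ball_subset_ball (x := x) one_le_two)).trans
    (by simpa using H.measureReal_ball_two_pow_mul_le x one_pos 1)
  exact (le_mul_iff_one_le_left (H.measureReal_ball_pos x one_pos)).1 h

lemma measureReal_ball_le_of_dist_lt {x y : M} {r : ℝ} (hr : 0 < r) {k : ℕ}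
    (hxy : dist x y < 2 ^ k * r) :
    H.μ.real (ball x r) ≤ H.C_D ^ (k + 1) * H.μ.real (ball y r) := by
  refine (H.measureReal_ball_mono (ball_subset_ball' ?_)).trans
    (H.measureReal_ball_two_pow_mul_le y hr (k + 1))
  have hrk : r ≤ 2 ^ k * r := le_mul_of_one_le_left hr.le (one_le_pow₀ one_le_two)
  rw [pow_succ]
  linarith

lemma measureReal_ball_div_le_sqrt {x y : M} {r : ℝ} (hr : 0 < r) {k : ℕ}
    (hxy : dist x y < 2 ^ k * r) :
    H.μ.real (ball x r) / H.C_D ^ (k + 1) ≤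
      √(H.μ.real (ball x r) * H.μ.real (ball y r)) := by
  have hD := H.one_le_C_D x
  refine Real.le_sqrt_of_sq_le ?_
  rw [sq]
  refine mul_le_mul (div_le_self measureReal_nonneg (one_le_pow₀ hD)) ?_ (by positivity)
    measureReal_nonneg
  rw [div_le_iff₀' (by positivity)]
  exact H.measureReal_ball_le_of_dist_lt hr hxy

-- The Gaussian factor beats the growth of the volumes of the balls `B(x, 2 ^ k * ρ)`.
lemma exists_integrable_ge_gaussian {c : ℝ} (hc : 0 < c) : ∃ K, 0 ≤ K ∧ ∀ ρ, 0 < ρ → ∀ x,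
    ∃ G : M → ℝ, Integrable G H.μ ∧ ∫ y, G y ∂H.μ ≤ K ∧ ∀ᵐ y ∂H.μ,
      Real.exp (-c * (dist x y ^ 2 / ρ ^ 2)) /
        √(H.μ.real (ball x ρ) * H.μ.real (ball y ρ)) ≤ G y := by
  have hD := H.C_D_pos
  have hsum := (summable_pow_mul_exp_neg_mul_pow (pow_pos hD 2) (by positivity : 0 < c / 4)
    (by norm_num : (1 : ℝ) < 4)).mul_left (Real.exp (c / 4) * H.C_D)
  refine ⟨∑' k : ℕ, Real.exp (c / 4) * H.C_D * ((H.C_D ^ 2) ^ k * Real.exp (-(c / 4) * 4 ^ k)),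
    tsum_nonneg fun k => by positivity, fun ρ hρ x => ?_⟩
  have hv := H.measureReal_ball_pos x hρ
  set v := H.μ.real (ball x ρ)
  let w : ℕ → ℝ := fun k => Real.exp (c / 4 + -(c / 4) * 4 ^ k) / (v / H.C_D ^ (k + 1))
  have hw : ∀ k, 0 ≤ w k := fun k => by positivity
  have hmass : ∀ k, w k * H.μ.real (ball x (2 ^ k * ρ)) ≤
      Real.exp (c / 4) * H.C_D * ((H.C_D ^ 2) ^ k * Real.exp (-(c / 4) * 4 ^ k)) := fun k =>
    calc w k * H.μ.real (ball x (2 ^ k * ρ)) ≤ w k * (H.C_D ^ k * v) :=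
          mul_le_mul_of_nonneg_left (H.measureReal_ball_two_pow_mul_le x hρ k) (hw k)
      _ = _ := by
          simp only [w, Real.exp_add]
          field_simp
          ring
  have hmass_sum := Summable.of_nonneg_of_le
    (fun k => mul_nonneg (hw k) measureReal_nonneg) hmass hsum
  obtain ⟨G, hG, hG_int, hG_ge⟩ :=
    exists_integrable_ge_of_summable hw (fun k => H.measure_ball_ne_top x _) hmass_sum
  refine ⟨G, hG, hG_int.trans_le (hmass_sum.tsum_le_tsum hmass hsum), ?_⟩
  filter_upwards [hG_ge] with y hy
  obtain ⟨k, hk, hk_le⟩ := exists_dist_lt_two_pow_mul x y hρ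
  rw [← le_div_iff₀ (by positivity)] at hk_le
  have hexp : -c * (dist x y ^ 2 / ρ ^ 2) ≤ c / 4 + -(c / 4) * 4 ^ k := by
    linarith [mul_le_mul_of_nonneg_left hk_le hc.le]
  refine (?_ : _ ≤ w k).trans (hy k (by rwa [mem_ball']))
  exact div_le_div₀ (Real.exp_nonneg _) (Real.exp_le_exp.2 hexp) (by positivity)
    (H.measureReal_ball_div_le_sqrt hρ hk)

instance : SigmaFinite H.μ := by
  rcases isEmpty_or_nonempty M with _ | ⟨⟨x⟩⟩
  · rw [H.μ.eq_zero_of_isEmpty]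
    infer_instance
  · exact ⟨⟨⟨fun k : ℕ => ball x k, fun _ => mem_univ _,
      fun k => (H.measure_ball_ne_top x k).lt_top, iUnion_ball_nat x⟩⟩⟩

end Volume

section Kernel

/-- The time derivative `∂_t^m p_t(x, y)` of the heat kernel. -/
def dp (m : ℕ) (t : ℝ) (x y : M) : ℝ := iteratedDeriv m (fun s => H.p s x y) t

lemma hasDerivAt_dp (m : ℕ) {t : ℝ} (ht : 0 < t) (x y : M) :
    HasDerivAt (fun s => H.dp m s x y) (H.dp (m + 1) t x y) t := by
  rw [dp, iteratedDeriv_succ]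
  exact (H.smooth x y m t ht).hasDerivAt

lemma measurable_p_right {t : ℝ} (ht : 0 < t) (x : M) : Measurable (H.p t x) :=
  (H.p_meas t ht).comp measurable_prodMk_left

lemma measurable_dp_right (m : ℕ) {t : ℝ} (ht : 0 < t) (x : M) : Measurable (H.dp m t x) :=
  measurable_iteratedDeriv (fun _ ht => H.measurable_p_right ht x)
    (fun y m t ht => H.smooth x y m t ht) m t ht

lemma integrable_p {t : ℝ} (ht : 0 < t) (x : M) : Integrable (H.p t x) H.μ :=
  .of_integral_ne_zero (by simp [H.conservative t ht x])

lemma exists_abs_dp_le (m : ℕ) : ∃ C, 0 < C ∧ ∃ c, 0 < c ∧ ∀ r s, 0 < r → r ≤ s → s ≤ 4 * r →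
    s ≤ 1 → ∀ x y, |H.dp m s x y| ≤
      C * (r ^ m)⁻¹ / √(H.μ.real (ball x √r) * H.μ.real (ball y √r)) *
        Real.exp (-c * (dist x y ^ 2 / r)) := by
  obtain ⟨C, hC, c, hc, hUE⟩ := H.UE m
  refine ⟨C, hC, c / 4, by positivity, fun r s hr hrs hs4 hs1 x y => ?_⟩
  have hs : 0 < s := hr.trans_le hrs
  have hVx := H.measureReal_ball_pos x (Real.sqrt_pos.2 hr)
  have hVy := H.measureReal_ball_pos y (Real.sqrt_pos.2 hr)
  have hmono (z : M) : H.μ.real (ball z √r) ≤ H.μ.real (ball z √s) :=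
    H.measureReal_ball_mono (ball_subset_ball (Real.sqrt_le_sqrt hrs))
  have hsqrt : √(H.μ.real (ball x √r) * H.μ.real (ball y √r)) ≤
      √(H.μ.real (ball x √s) * H.μ.real (ball y √s)) :=
    Real.sqrt_le_sqrt (mul_le_mul (hmono x) (hmono y) hVy.le measureReal_nonneg)
  have hexp : -c * dist x y ^ 2 / s ≤ -(c / 4) * (dist x y ^ 2 / r) := by
    rw [neg_mul, neg_mul, neg_div, neg_le_neg_iff, div_mul_div_comm]
    gcongr
  have hs_bound := hUE s hs hs1 x y
  rw [abs_mul, abs_of_pos (pow_pos hs m), ← le_div_iff₀' (pow_pos hs m)] at hs_bound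
  calc |H.dp m s x y|
      ≤ C / √(H.μ.real (ball x √s) * H.μ.real (ball y √s)) *
          Real.exp (-c * dist x y ^ 2 / s) / s ^ m := hs_bound
    _ ≤ C / √(H.μ.real (ball x √r) * H.μ.real (ball y √r)) *
          Real.exp (-(c / 4) * (dist x y ^ 2 / r)) / r ^ m := by
        gcongr ?_ * Real.exp ?_ / ?_
        · exact div_le_div_of_nonneg_left hC.le (by positivity) hsqrt
        · exact pow_le_pow_left₀ hr.le hrs m
    _ = _ := by ring

lemma exists_integrable_bound_dp (m : ℕ) : ∃ K, 0 ≤ K ∧ ∀ r, 0 < r → ∀ x,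
    ∃ G : M → ℝ, Integrable G H.μ ∧ ∫ y, G y ∂H.μ ≤ K * (r ^ m)⁻¹ ∧
      ∀ᵐ y ∂H.μ, ∀ s, r ≤ s → s ≤ 4 * r → s ≤ 1 → |H.dp m s x y| ≤ G y := by
  obtain ⟨C, hC, c, hc, hdp⟩ := H.exists_abs_dp_le m
  obtain ⟨K, hK, hgauss⟩ := H.exists_integrable_ge_gaussian hc
  refine ⟨C * K, by positivity, fun r hr x => ?_⟩
  obtain ⟨G, hG, hG_int, hG_ge⟩ := hgauss √r (Real.sqrt_pos.2 hr) x
  refine ⟨fun y => C * (r ^ m)⁻¹ * G y, hG.const_mul _, ?_, ?_⟩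
  · rw [integral_const_mul, mul_right_comm]
    gcongr
  · filter_upwards [hG_ge] with y hy s hrs hs4 hs1
    rw [Real.sq_sqrt hr.le] at hy
    calc |H.dp m s x y| ≤ _ := hdp r s hr hrs hs4 hs1 x y
      _ = C * (r ^ m)⁻¹ * (Real.exp (-c * (dist x y ^ 2 / r)) /
            √(H.μ.real (ball x √r) * H.μ.real (ball y √r))) := by ring
      _ ≤ C * (r ^ m)⁻¹ * G y := by gcongr

lemma integrable_dp_and_exists_integral_abs_le (m : ℕ) : ∃ K, 0 ≤ K ∧ ∀ t, 0 < t → t ≤ 1 → ∀ x,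
    Integrable (H.dp m t x) H.μ ∧ ∫ y, |H.dp m t x y| ∂H.μ ≤ K * (t ^ m)⁻¹ := by
  obtain ⟨K, hK, hdp⟩ := H.exists_integrable_bound_dp m
  refine ⟨K, hK, fun t ht ht1 x => ?_⟩
  obtain ⟨G, hG, hG_le, hbound⟩ := hdp t ht x
  have hle : ∀ᵐ y ∂H.μ, |H.dp m t x y| ≤ G y :=
    hbound.mono fun y hy => hy t le_rfl (by linarith) ht1
  have hint : Integrable (H.dp m t x) H.μ :=
    hG.mono' (H.measurable_dp_right m ht x).aestronglyMeasurable hle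
  exact ⟨hint, (integral_mono_ae hint.abs hG hle).trans hG_le⟩

end Kernel

section Semigroup

variable {g : M → ℝ} (hg : Measurable g) {B : ℝ} (hB : ∀ x, |g x| ≤ B)

include hB in
lemma abs_S_le {t : ℝ} (ht : 0 < t) (x : M) : |H.S t g x| ≤ B := by
  refine (abs_integral_mul_le (H.integrable_p ht x) hB).trans_eq ?_
  simp only [abs_of_nonneg (H.p_nonneg t ht x _), H.conservative t ht x, one_mul]

include hg in
lemma measurable_S {t : ℝ} (ht : 0 < t) : Measurable (H.S t g) :=
  ((H.p_meas t ht).mul (hg.comp measurable_snd)).stronglyMeasurable.integral_prod_right.measurable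

include hg hB in
lemma integrable_p_mul_p_mul {s t : ℝ} (hs : 0 < s) (ht : 0 < t) (x : M) :
    Integrable (Function.uncurry fun y z => H.p s x y * (H.p t y z * g z)) (H.μ.prod H.μ) := by
  have hmeas : Measurable (Function.uncurry fun y z => H.p s x y * (H.p t y z * g z)) :=
    ((H.measurable_p_right hs x).comp measurable_fst).mul
      ((H.p_meas t ht).mul (hg.comp measurable_snd))
  refine (integrable_prod_iff hmeas.aestronglyMeasurable).2 ⟨Eventually.of_forall fun y => ?_, ?_⟩
  · exact ((H.integrable_p ht y).mul_bdd hg.aestronglyMeasurable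
      (Eventually.of_forall hB)).const_mul (H.p s x y)
  · refine ((H.integrable_p hs x).mul_const B).mono'
      hmeas.norm.stronglyMeasurable.integral_prod_right'.aestronglyMeasurable
      (Eventually.of_forall fun y => ?_)
    calc ‖∫ z, ‖H.p s x y * (H.p t y z * g z)‖ ∂H.μ‖ = H.p s x y * |H.S t (|g ·|) y| := by
          simp only [norm_mul, Real.norm_of_nonneg (H.p_nonneg s hs x y),
            Real.norm_of_nonneg (H.p_nonneg t ht y _), integral_const_mul, Real.norm_eq_abs, S]
      _ ≤ H.p s x y * B := mul_le_mul_of_nonneg_left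
          (H.abs_S_le (fun z => (abs_abs (g z)).trans_le (hB z)) ht y) (H.p_nonneg s hs x y)

include hg hB in
lemma S_add {s t : ℝ} (hs : 0 < s) (ht : 0 < t) (x : M) :
    H.S (s + t) g x = H.S s (H.S t g) x :=
  calc H.S (s + t) g x = ∫ z, ∫ y, H.p s x y * (H.p t y z * g z) ∂H.μ ∂H.μ := by
        simp only [S, H.semigroup s t hs ht, ← integral_mul_const, mul_assoc]
    _ = ∫ y, ∫ z, H.p s x y * (H.p t y z * g z) ∂H.μ ∂H.μ :=
        (integral_integral_swap (H.integrable_p_mul_p_mul hg hB hs ht x)).symm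
    _ = H.S s (H.S t g) x := by simp only [S, integral_const_mul]

/-- The time derivative `∂_t^m (e^{-tL} f)` of the semigroup. -/
def dS (m : ℕ) (t : ℝ) (f : M → ℝ) (x : M) : ℝ := iteratedDeriv m (fun s => H.S s f x) t

include hg hB in
lemma dS_eq_integral (m : ℕ) {t : ℝ} (ht : 0 < t) (x : M) :
    H.dS m t g x = ∫ y, H.dp m t x y * g y ∂H.μ :=
  H.diff_under_int g hg (((supNorm_le_ofReal_iff ((abs_nonneg _).trans (hB x))).2 hB).trans_lt
    ENNReal.ofReal_lt_top) m x t ht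

include hg hB in
lemma hasDerivAt_dS_of_lt_one (m : ℕ) {t : ℝ} (ht : 0 < t) (ht1 : t < 1) (x : M) :
    HasDerivAt (fun s => H.dS m s g x) (H.dS (m + 1) t g x) t := by
  obtain ⟨_, -, hbound⟩ := H.exists_integrable_bound_dp (m + 1)
  obtain ⟨G, hG, -, hG_ge⟩ := hbound (t / 2) (half_pos ht) x
  obtain ⟨_, -, hdp⟩ := H.integrable_dp_and_exists_integral_abs_le m
  have hmeas (j : ℕ) {s : ℝ} (hs : 0 < s) :
      AEStronglyMeasurable (fun y => H.dp j s x y * g y) H.μ :=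
    ((H.measurable_dp_right j hs x).mul hg).aestronglyMeasurable
  have hnhds : Ioo (t / 2) (min 1 (2 * t)) ∈ 𝓝 t :=
    Ioo_mem_nhds (half_lt_self ht) (lt_min ht1 (lt_two_mul_self ht))
  rw [H.dS_eq_integral hg hB (m + 1) ht x]
  refine (hasDerivAt_integral_of_dominated_loc_of_deriv_le (bound := fun y => G y * B)
    (F' := fun s y => H.dp (m + 1) s x y * g y) hnhds
    ((lt_mem_nhds ht).mono fun s => hmeas m)
    ((hdp t ht ht1.le x).1.mul_bdd hg.aestronglyMeasurable (Eventually.of_forall hB))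
    (hmeas (m + 1) ht) ?_ (hG.mul_const B) ?_).2.congr_of_eventuallyEq
    ((lt_mem_nhds ht).mono fun s hs => H.dS_eq_integral hg hB m hs x)
  · filter_upwards [hG_ge] with y hy s hs
    obtain ⟨hs1, hs2⟩ := lt_min_iff.1 hs.2
    have hle := hy s hs.1.le (by linarith) hs1.le
    rw [norm_mul]
    exact mul_le_mul hle (hB y) (norm_nonneg _) ((abs_nonneg _).trans hle)
  · exact Eventually.of_forall fun y s hs =>
      (H.hasDerivAt_dp m ((half_pos ht).trans hs.1) x y).mul_const (g y)

include hg hB in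
lemma dS_add_S (m : ℕ) {s t : ℝ} (hs : 0 < s) (ht : 0 < t) (x : M) :
    H.dS m (s + t) g x = H.dS m s (H.S t g) x :=
  iteratedDeriv_add_right_eq_of_forall_pos (fun _ hr => H.S_add hg hB hr ht x) m hs

include hg hB in
lemma hasDerivAt_dS (m : ℕ) {t : ℝ} (ht : 0 < t) (x : M) :
    HasDerivAt (fun s => H.dS m s g x) (H.dS (m + 1) t g x) t := by
  obtain ⟨s, hs, hst⟩ := exists_between (lt_min ht one_pos)
  obtain ⟨hst, hs1⟩ := lt_min_iff.1 hst
  obtain ⟨r, hr, rfl⟩ : ∃ r, 0 < r ∧ s + r = t := ⟨t - s, sub_pos.2 hst, add_sub_cancel s t⟩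
  have hd := H.hasDerivAt_dS_of_lt_one (H.measurable_S hg hr) (H.abs_S_le hB hr) m hs hs1 x
  rw [H.dS_add_S hg hB (m + 1) hs hr x]
  have hd' : HasDerivAt (fun q => H.dS m (q - r) (H.S r g) x) (H.dS (m + 1) s (H.S r g) x)
      (s + r) := HasDerivAt.comp_sub_const _ r (by rwa [add_sub_cancel_right])
  refine hd'.congr_of_eventuallyEq ((lt_mem_nhds (lt_add_of_pos_left r hs)).mono fun q hq => ?_)
  simp only [← H.dS_add_S hg hB m (sub_pos.2 hq) hr x, sub_add_cancel]

include hg hB in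
lemma measurable_dS (m : ℕ) {t : ℝ} (ht : 0 < t) : Measurable (H.dS m t g) :=
  measurable_iteratedDeriv (fun _ ht => H.measurable_S hg ht)
    (fun x m _ ht => (H.hasDerivAt_dS hg hB m ht x).differentiableAt) m t ht

lemma exists_abs_dS_le (m : ℕ) : ∃ K, 0 ≤ K ∧ ∀ g, Measurable g → ∀ B, (∀ x, |g x| ≤ B) →
    ∀ t, 0 < t → t ≤ 1 → ∀ x, |H.dS m t g x| ≤ K * (t ^ m)⁻¹ * B := by
  obtain ⟨K, hK, hdp⟩ := H.integrable_dp_and_exists_integral_abs_le m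
  refine ⟨K, hK, fun g hg B hB t ht ht1 x => ?_⟩
  obtain ⟨hint, hle⟩ := hdp t ht ht1 x
  rw [H.dS_eq_integral hg hB m ht x]
  exact (abs_integral_mul_le hint hB).trans
    (mul_le_mul_of_nonneg_right hle ((abs_nonneg _).trans (hB x)))

include hg hB in
lemma exists_abs_dS_le_of_le (m : ℕ) {r : ℝ} (hr : 0 < r) :
    ∃ K, ∀ t, r ≤ t → ∀ x, |H.dS m t g x| ≤ K := by
  obtain ⟨K, -, hK⟩ := H.exists_abs_dS_le m
  let s := min (r / 2) 1
  have hs : 0 < s := lt_min (half_pos hr) one_pos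
  refine ⟨K * (s ^ m)⁻¹ * B, fun t hrt x => ?_⟩
  have hst : 0 < t - s := by linarith [min_le_left (r / 2) 1]
  have h := hK _ (H.measurable_S hg hst) B (H.abs_S_le hB hst) s hs (min_le_right _ _) x
  rwa [← H.dS_add_S hg hB m hs hst x, add_sub_cancel] at h

include hg hB in
lemma S_dS (m : ℕ) {s : ℝ} (hs : 0 < s) (x : M) :
    ∀ {t : ℝ}, 0 < t → H.S s (H.dS m t g) x = H.dS m (s + t) g x := by
  induction m with
  | zero => exact fun ht => (H.S_add hg hB hs ht x).symm
  | succ m ih =>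
    intro t ht
    have hmeas (j : ℕ) {r : ℝ} (hr : 0 < r) :
        AEStronglyMeasurable (fun y => H.p s x y * H.dS j r g y) H.μ :=
      ((H.measurable_p_right hs x).mul (H.measurable_dS hg hB j hr)).aestronglyMeasurable
    obtain ⟨K₀, hK₀⟩ := H.exists_abs_dS_le_of_le hg hB m ht
    obtain ⟨K, hK⟩ := H.exists_abs_dS_le_of_le hg hB (m + 1) (half_pos ht)
    have hleft : HasDerivAt (fun r => H.S s (H.dS m r g) x) (H.S s (H.dS (m + 1) t g) x) t := by
      refine (hasDerivAt_integral_of_dominated_loc_of_deriv_le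
        (bound := fun y => H.p s x y * K) (F' := fun r y => H.p s x y * H.dS (m + 1) r g y)
        (Ioi_mem_nhds (half_lt_self ht)) ((lt_mem_nhds ht).mono fun r => hmeas m)
        ((H.integrable_p hs x).mul_bdd (H.measurable_dS hg hB m ht).aestronglyMeasurable
          (Eventually.of_forall (hK₀ t le_rfl)))
        (hmeas (m + 1) ht) (Eventually.of_forall fun y r hr => ?_)
        ((H.integrable_p hs x).mul_const K) (Eventually.of_forall fun y r hr => ?_)).2
      · rw [norm_mul, Real.norm_of_nonneg (H.p_nonneg s hs x y)]
        exact mul_le_mul_of_nonneg_left (hK r (mem_Ioi.1 hr).le y) (H.p_nonneg s hs x y)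
      · exact (H.hasDerivAt_dS hg hB m ((half_pos ht).trans hr) y).const_mul _
    have hright := (H.hasDerivAt_dS hg hB m (add_pos hs ht) x).comp_const_add s t
    exact hleft.unique (hright.congr_of_eventuallyEq ((lt_mem_nhds ht).mono fun r hr => ih hr))

include hg hB in
lemma dS_dS (j m : ℕ) {s t : ℝ} (hs : 0 < s) (ht : 0 < t) (x : M) :
    H.dS j s (H.dS m t g) x = H.dS (j + m) (s + t) g x := by
  have h := iteratedDeriv_add_right_eq_of_forall_pos
    (fun r hr => (H.S_dS hg hB m hr x ht).symm) j hs
  rw [dS, ← h, dS]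
  simp only [iteratedDeriv_eq_iterate, Function.iterate_add_apply]

end Semigroup

section Holder

variable {σ : ℝ} {a b c : ℕ} {f : M → ℝ} {A : ℝ}

/-- The pointwise form of `‖f‖_{C^σ,(a)} ≤ A`, up to a factor `2`: both terms of the norm are at
most `A`, with `Q_t^{(a)} f` written as `± t^a ∂_t^a (e^{-tL} f)`. -/
structure HolderBound (σ : ℝ) (a : ℕ) (f : M → ℝ) (A : ℝ) : Prop where
  abs_S_one_le : ∀ x, |H.S 1 f x| ≤ A
  abs_dS_le : ∀ t ∈ Ioc (0 : ℝ) 1, ∀ x, |H.dS a t f x| ≤ A * t ^ (σ / 2 - a)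

lemma rpow_mul_supNorm_Q_le_iff {t : ℝ} (ht : 0 < t) (hA : 0 ≤ A) :
    ENNReal.ofReal (t ^ (-σ / 2)) * supNorm (H.Q a t f) ≤ ENNReal.ofReal A ↔
      ∀ x, |H.dS a t f x| ≤ A * t ^ (σ / 2 - a) := by
  have hw : t ^ (σ / 2 - a) = (t ^ (-σ / 2) * t ^ a)⁻¹ := by
    rw [← Real.rpow_natCast, ← Real.rpow_add ht, ← Real.rpow_neg ht.le]
    ring_nf
  rw [ofReal_mul_supNorm_le_ofReal_iff (by positivity) hA]
  refine forall_congr' fun x => ?_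
  rw [hw, ← div_eq_mul_inv, le_div_iff₀' (by positivity), mul_assoc, Q, dS, abs_mul, abs_mul,
    abs_pow, abs_neg, abs_one, one_pow, one_mul, abs_of_pos (pow_pos ht a)]

variable {H} in
lemma HolderBound.of_CNorm_ne_top (hf : H.CNorm a σ f ≠ ⊤) :
    H.HolderBound σ a f (H.CNorm a σ f).toReal where
  abs_S_one_le := (supNorm_le_ofReal_iff ENNReal.toReal_nonneg).1 <| by
    rw [ENNReal.ofReal_toReal hf]
    exact le_self_add
  abs_dS_le t ht := (H.rpow_mul_supNorm_Q_le_iff ht.1 ENNReal.toReal_nonneg).1 <| by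
    rw [ENNReal.ofReal_toReal hf]
    exact (le_iSup₂ (f := fun (t : ℝ) (_ : t ∈ Ioc (0 : ℝ) 1) =>
      ENNReal.ofReal (t ^ (-σ / 2)) * supNorm (H.Q a t f)) t ht).trans le_add_self

variable {H} in
lemma HolderBound.CNorm_le (hA : 0 ≤ A) (hf : H.HolderBound σ a f A) :
    H.CNorm a σ f ≤ ENNReal.ofReal (2 * A) := by
  rw [two_mul, ENNReal.ofReal_add hA hA]
  exact add_le_add ((supNorm_le_ofReal_iff hA).2 hf.abs_S_one_le) (iSup₂_le fun t ht =>
    (H.rpow_mul_supNorm_Q_le_iff ht.1 hA).2 (hf.abs_dS_le t ht))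

/-- The Hölder norm with parameter `b` is at most a constant times the one with parameter `a`, on
bounded measurable functions. -/
def CNormDominates (σ : ℝ) (a b : ℕ) : Prop :=
  ∃ C, 0 < C ∧ ∀ f : M → ℝ, Measurable f → supNorm f < ⊤ →
    H.CNorm b σ f ≤ ENNReal.ofReal C * H.CNorm a σ f

variable {H}

lemma CNormDominates.trans (hab : H.CNormDominates σ a b) (hbc : H.CNormDominates σ b c) :
    H.CNormDominates σ a c := by
  obtain ⟨C, hC, hab⟩ := hab
  obtain ⟨D, hD, hbc⟩ := hbc
  refine ⟨D * C, by positivity, fun f hf hf_bdd => (hbc f hf hf_bdd).trans ?_⟩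
  rw [ENNReal.ofReal_mul hD.le, mul_assoc]
  exact mul_le_mul_right (hab f hf hf_bdd) _

lemma CNormDominates.of_forall_holderBound {C : ℝ} (hC : 0 ≤ C)
    (h : ∀ f, Measurable f → ∀ B, (∀ x, |f x| ≤ B) → ∀ A, H.HolderBound σ a f A →
      ∀ t ∈ Ioc (0 : ℝ) 1, ∀ x, |H.dS b t f x| ≤ C * A * t ^ (σ / 2 - b)) :
    H.CNormDominates σ a b := by
  refine ⟨2 * (1 + C), by positivity, fun f hf hf_bdd => ?_⟩
  rcases eq_or_ne (H.CNorm a σ f) ⊤ with htop | hfin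
  · rw [htop, ENNReal.mul_top (ENNReal.ofReal_pos.2 (by positivity)).ne']
    exact le_top
  · have hA := HolderBound.of_CNorm_ne_top hfin
    have hfC : H.HolderBound σ b f ((1 + C) * (H.CNorm a σ f).toReal) :=
      ⟨fun x => (hA.abs_S_one_le x).trans
          (le_mul_of_one_le_left ENNReal.toReal_nonneg (le_add_of_nonneg_right hC)),
        fun t ht x => (h f hf _ (abs_le_toReal_supNorm hf_bdd) _ hA t ht x).trans <| by
          have := Real.rpow_nonneg ht.1.le (σ / 2 - b)
          gcongr
          exact le_add_of_nonneg_left zero_le_one⟩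
    calc H.CNorm b σ f ≤ ENNReal.ofReal (2 * ((1 + C) * (H.CNorm a σ f).toReal)) :=
          hfC.CNorm_le (by positivity)
      _ = ENNReal.ofReal (2 * (1 + C)) * H.CNorm a σ f := by
          rw [← mul_assoc, ENNReal.ofReal_mul (by positivity), ENNReal.ofReal_toReal hfin]

lemma CNormDominates.of_le (hab : a ≤ b) : H.CNormDominates σ a b := by
  obtain ⟨j, rfl⟩ := Nat.exists_eq_add_of_le' hab
  obtain ⟨K, hK, hdS⟩ := H.exists_abs_dS_le j
  refine .of_forall_holderBound (C := K * (1 / 2) ^ (σ / 2 - (j + a : ℕ))) (by positivity)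
    fun f hf B hB A hA t ht x => ?_
  have ht2 : 0 < t / 2 := half_pos ht.1
  have ht2' : t / 2 ≤ 1 := (half_le_self ht.1.le).trans ht.2
  calc |H.dS (j + a) t f x| = |H.dS j (t / 2) (H.dS a (t / 2) f) x| := by
        rw [H.dS_dS hf hB j a ht2 ht2, add_halves]
    _ ≤ K * ((t / 2) ^ j)⁻¹ * (A * (t / 2) ^ (σ / 2 - a)) :=
        hdS _ (H.measurable_dS hf hB a ht2) _ (hA.abs_dS_le _ ⟨ht2, ht2'⟩) _ ht2 ht2' x
    _ = K * A * (t / 2) ^ (σ / 2 - (j + a : ℕ)) := by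
        rw [Nat.cast_add, add_comm (j : ℝ), ← sub_sub, Real.rpow_sub_natCast ht2.ne' (σ / 2 - a)]
        ring
    _ = K * (1 / 2) ^ (σ / 2 - (j + a : ℕ)) * A * t ^ (σ / 2 - (j + a : ℕ)) := by
        rw [div_eq_mul_one_div, Real.mul_rpow ht.1.le one_half_pos.le]
        ring

lemma HolderBound.abs_dS_le_of_le_two (hA : H.HolderBound σ a f A) (hf : Measurable f) {B : ℝ}
    (hB : ∀ x, |f x| ≤ B) {t : ℝ} (ht : t ∈ Ioc (0 : ℝ) 2) (x : M) :
    |H.dS a t f x| ≤ A * (1 / 2) ^ (σ / 2 - a) * t ^ (σ / 2 - a) := by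
  have ht2 : 0 < t / 2 := half_pos ht.1
  rw [← add_halves t, ← H.S_dS hf hB a ht2 x ht2, add_halves, mul_assoc,
    ← Real.mul_rpow one_half_pos.le ht.1.le, one_div_mul_eq_div]
  exact H.abs_S_le (hA.abs_dS_le _ ⟨ht2, by linarith [ht.2]⟩) ht2 x

lemma CNormDominates.succ_self (hσ : σ < 2 * a) : H.CNormDominates σ (a + 1) a := by
  obtain ⟨K, hK, hdS⟩ := H.exists_abs_dS_le a
  set e : ℝ := σ / 2 - a with he
  have he_neg : e < 0 := by linarith
  refine .of_forall_holderBound (C := K + (1 / 2) ^ (e - 1) / -e)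
    (add_nonneg hK (div_nonneg (by positivity) (by linarith))) fun f hf B hB A hA t ht x => ?_
  have hA0 : 0 ≤ A := (abs_nonneg _).trans (hA.abs_S_one_le x)
  have hend : |H.dS a 2 f x| ≤ K * A := by
    have h := hdS _ (H.measurable_S hf one_pos) A hA.abs_S_one_le 1 one_pos le_rfl x
    rwa [← H.dS_add_S hf hB a one_pos one_pos x, one_add_one_eq_two, one_pow, inv_one,
      mul_one] at h
  have hdiff := norm_sub_le_of_norm_deriv_le_rpow he_neg.ne ht.1 (ht.2.trans one_le_two)
    (F := fun s => H.dS a s f x) (A := A * (1 / 2) ^ (e - 1))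
    (fun s hs => H.hasDerivAt_dS hf hB a (ht.1.trans_le hs.1) x) fun s hs => by
      have h := hA.abs_dS_le_of_le_two hf hB ⟨ht.1.trans_le hs.1, hs.2⟩ x
      rwa [Nat.cast_succ, ← sub_sub, ← he] at h
  have hpow : ((2 : ℝ) ^ e - t ^ e) / e ≤ t ^ e / -e := by
    rw [div_neg, ← neg_div, div_le_div_right_of_neg he_neg]
    linarith [Real.rpow_nonneg zero_le_two e]
  have hone : 1 ≤ t ^ e := Real.one_le_rpow_of_pos_of_le_one_of_nonpos ht.1 ht.2 he_neg.le
  calc |H.dS a t f x| ≤ |H.dS a 2 f x| + |H.dS a 2 f x - H.dS a t f x| := by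
        linarith [abs_sub_abs_le_abs_sub (H.dS a t f x) (H.dS a 2 f x),
          abs_sub_comm (H.dS a t f x) (H.dS a 2 f x)]
    _ ≤ K * A + A * (1 / 2) ^ (e - 1) * ((2 ^ e - t ^ e) / e) := add_le_add hend hdiff
    _ ≤ K * A * t ^ e + A * (1 / 2) ^ (e - 1) * (t ^ e / -e) := by
        gcongr ?_ + _ * ?_
        exact le_mul_of_one_le_right (by positivity) hone
    _ = (K + (1 / 2) ^ (e - 1) / -e) * A * t ^ e := by ring

lemma CNormDominates.of_ge (hba : b ≤ a) (hσ : σ < 2 * b) : H.CNormDominates σ a b := by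
  induction a, hba using Nat.le_induction with
  | base => exact .of_le le_rfl
  | succ a hba ih =>
    have hab : (b : ℝ) ≤ a := by exact_mod_cast hba
    exact (CNormDominates.succ_self (by linarith)).trans ih

end Holder

end HeatKernelSetup

theorem holder_norms_equivalent_general
    {M : Type*} [MeasurableSpace M] [MetricSpace M] (H : HeatKernelSetup M)
    (σ : ℝ) (a a' : ℕ) (h : a ≤ a' ∨ σ < 2 * a') :
    ∃ C, 0 < C ∧ ∀ f : M → ℝ, Measurable f → supNorm f < ⊤ →
      (⨆ t ∈ Set.Ioc (0 : ℝ) 1, ENNReal.ofReal (t ^ (-σ / 2)) * supNorm (H.Q a' t f))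
          ≤ ENNReal.ofReal C * H.CNorm a σ f ∧
      H.CNorm a' σ f ≤ ENNReal.ofReal C * H.CNorm a σ f := by
  have hdom : H.CNormDominates σ a a' := by
    rcases le_or_gt a a' with hle | hlt
    · exact .of_le hle
    · exact .of_ge hlt.le (h.resolve_left hlt.not_ge)
  obtain ⟨C, hC, hCNorm⟩ := hdom
  exact ⟨C, hC, fun f hf hf_bdd =>
    ⟨le_add_self.trans (hCNorm f hf hf_bdd), hCNorm f hf hf_bdd⟩⟩

/-- For `σ < 2` and integers `a, a' ≥ 1` the Hölder norms `‖·‖_{C^σ,(a)}` and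
`‖·‖_{C^σ,(a')}` are equivalent: the `Q^{(a')}`-part of the norm is controlled by the full
`(a)`-norm, and hence `‖f‖_{C^σ,(a')} ≤ C ‖f‖_{C^σ,(a)}`.  In particular the space `C^σ` does
not depend on the parameter `a`. -/
theorem holder_norms_equivalent
    {M : Type*} [MeasurableSpace M] [MetricSpace M] (H : HeatKernelSetup M)
    (σ : ℝ) (hσ : σ < 2) (a a' : ℕ) (ha : 1 ≤ a) (ha' : 1 ≤ a') :
    ∃ C, 0 < C ∧ ∀ f : M → ℝ, Measurable f → supNorm f < ⊤ →
      (⨆ t ∈ Set.Ioc (0 : ℝ) 1, ENNReal.ofReal (t ^ (-σ / 2)) * supNorm (H.Q a' t f))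
          ≤ ENNReal.ofReal C * H.CNorm a σ f ∧
      H.CNorm a' σ f ≤ ENNReal.ofReal C * H.CNorm a σ f := by
  have one_le : (1 : ℝ) ≤ a' := by exact_mod_cast ha'
  exact holder_norms_equivalent_general H σ a a' (Or.inr (by linarith))
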